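/- Let n ≥ 2 and let f, h : ℝⁿ → ℝ be continuous and compactly supported. If Kf(x) = Kh(x) for every x ∈ ℝⁿ, then the X-ray transforms agree: Xf(x,θ) = Xh(x,θ) for every x ∈ ℝⁿ and every θ ∈ S^{n-1}. In particular, if in addition the X-ray transform X is injective on continuous compactly supported functions (i.e., Xg ≡ 0 implies g ≡ 0), then f = h. -/

import Mathlib

open MeasureTheory Metric Real

/-- The `n`-dimensional Euclidean space. -/
abbrev Euc (n : ℕ) := EuclideanSpace ℝ (Fin n)

/-- The standard surface measure on the unit sphere `S^{n-1} ⊂ ℝⁿ`. -/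
noncomputable def sphereMeasure (n : ℕ) : Measure (sphere (0 : Euc n) 1) :=
  (volume : Measure (Euc n)).toSphere

/-- The surface measure `|S^{n-1}|` of the unit sphere in `ℝⁿ`. -/
noncomputable def sphereVol (n : ℕ) : ℝ := (sphereMeasure n Set.univ).toReal

/-- The X-ray transform `Xf(x,θ) = ∫_ℝ f(x+sθ) ds`. -/
noncomputable def Xray {n : ℕ} (f : Euc n → ℝ) (x θ : Euc n) : ℝ :=
  ∫ s : ℝ, f (x + s • θ)

/-- The normal operator `X'Xf(x) = ∫_{S^{n-1}} Xf(x,θ) dθ`. -/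
noncomputable def normalOp {n : ℕ} (f : Euc n → ℝ) (x : Euc n) : ℝ :=
  ∫ θ : sphere (0 : Euc n) 1, Xray f x (θ : Euc n) ∂(sphereMeasure n)

/-- The single pixel X-ray transform `Kf(x) = ∫_{S^{n-1}} e^{-Xf(x,θ)} dθ`. -/
noncomputable def singlePixel {n : ℕ} (f : Euc n → ℝ) (x : Euc n) : ℝ :=
  ∫ θ : sphere (0 : Euc n) 1, Real.exp (-(Xray f x (θ : Euc n))) ∂(sphereMeasure n)

/-- The Fourier transform `𝓕f(ξ) = ∫ e^{-i x·ξ} f(x) dx`. -/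
noncomputable def FT {n : ℕ} (f : Euc n → ℝ) (ξ : Euc n) : ℂ :=
  ∫ x : Euc n, Complex.exp (-(Complex.I * ((inner ℝ x ξ : ℝ) : ℂ))) * (f x : ℂ)

/-- The inverse Fourier transform `𝓕⁻¹g(x) = (2π)^{-n} ∫ e^{i x·ξ} g(ξ) dξ`. -/
noncomputable def invFT {n : ℕ} (g : Euc n → ℂ) (x : Euc n) : ℂ :=
  ((((2 * π) ^ n)⁻¹ : ℝ) : ℂ) * ∫ ξ : Euc n, Complex.exp (Complex.I * ((inner ℝ x ξ : ℝ) : ℂ)) * g ξ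

/-- The `L²(ℝⁿ)` norm `(∫ |f|²)^{1/2}`. -/
noncomputable def L2norm {n : ℕ} (f : Euc n → ℝ) : ℝ :=
  (∫ x : Euc n, f x ^ 2) ^ ((1 : ℝ) / 2)

/-- The `H¹(U)` norm `(∫_U |u|²)^{1/2} + (∫_U |∇u|²)^{1/2}`. -/
noncomputable def H1norm {n : ℕ} (U : Set (Euc n)) (u : Euc n → ℝ) : ℝ :=
  (∫ x in U, u x ^ 2) ^ ((1 : ℝ) / 2) + (∫ x in U, ‖fderiv ℝ u x‖ ^ 2) ^ ((1 : ℝ) / 2)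

/-- A compactly supported function vanishes outside some ball. -/
lemma HasCompactSupport.exists_norm_bound {E : Type*} [NormedAddCommGroup E] {g : E → ℝ}
    (hg : HasCompactSupport g) : ∃ R : ℝ, ∀ x, g x ≠ 0 → ‖x‖ ≤ R := by
  obtain ⟨R, hR⟩ := hg.isCompact.isBounded.exists_norm_le
  exact ⟨R, fun x hx => hR x (subset_tsupport g hx)⟩

/-- The X-ray transform is constant along the line it integrates over. -/
lemma Xray_add_smul {n : ℕ} (g : Euc n → ℝ) (x θ : Euc n) (t : ℝ) :
    Xray g (x + t • θ) θ = Xray g x θ := by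
  unfold Xray
  rw [← integral_add_left_eq_self (fun s : ℝ => g (x + s • θ)) t]
  simp only [add_smul, add_assoc]

lemma continuous_Xray {n : ℕ} {g : Euc n → ℝ} (hg : Continuous g) (hgc : HasCompactSupport g) :
    Continuous fun p : Euc n × sphere (0 : Euc n) 1 => Xray g p.1 p.2 := by
  obtain ⟨R, hR⟩ := hgc.exists_norm_bound
  refine continuous_iff_continuousAt.2 fun p₀ => ?_
  let U : Set (Euc n × sphere (0 : Euc n) 1) := {p | ‖p.1‖ < ‖p₀.1‖ + 1}
  have hU : IsOpen U := isOpen_lt (by fun_prop) (by fun_prop)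
  have hcont : ContinuousOn (fun p : Euc n × sphere (0 : Euc n) 1 => Xray g p.1 p.2) U := by
    refine continuousOn_integral_of_compact_support
      (isCompact_closedBall (0 : ℝ) (R + (‖p₀.1‖ + 1))) ?_ ?_
    · exact Continuous.continuousOn (by unfold Function.uncurry; fun_prop)
    · intro p s hp hs
      by_contra hne
      refine hs ?_
      have hp' : ‖p.1‖ < ‖p₀.1‖ + 1 := hp
      have hθ : ‖(p.2 : Euc n)‖ = 1 := norm_eq_of_mem_sphere p.2
      have h1 := norm_sub_le (p.1 + s • (p.2 : Euc n)) p.1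
      rw [add_sub_cancel_left, norm_smul, hθ, mul_one] at h1
      rw [mem_closedBall_zero_iff]
      linarith [hR _ hne]
  exact hcont.continuousAt (hU.mem_nhds (by simp [U]))

/-- If `x + sθ` lies in a ball and the component of `x` along `θ` is bounded, then so are
`x` and `s`. -/
lemma norm_and_abs_le_of_norm_add_smul_le {n : ℕ} {x θ : Euc n} {s R r : ℝ} (hθ : ‖θ‖ = 1)
    (hx : ‖x + s • θ‖ ≤ R) (hr : |inner ℝ x θ| ≤ r) : ‖x‖ ≤ 2 * R + r ∧ |s| ≤ R + r := by
  have h1 : |inner ℝ (x + s • θ) θ| ≤ R := by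
    have := abs_real_inner_le_norm (x + s • θ) θ
    rw [hθ, mul_one] at this
    exact this.trans hx
  rw [inner_add_left, real_inner_smul_left, real_inner_self_eq_norm_sq, hθ] at h1
  have h2 : |s| ≤ R + r := by
    rw [abs_le] at h1 hr ⊢
    constructor <;> linarith [h1.1, h1.2, hr.1, hr.2]
  refine ⟨?_, h2⟩
  have h3 := norm_sub_le (x + s • θ) (s • θ)
  rw [add_sub_cancel_right, norm_smul, hθ, mul_one, Real.norm_eq_abs] at h3
  linarith

/-- Integrating `g` against a function `q` that is constant along the direction `θ` amounts to
integrating the X-ray transform of `g` against `q`, localized by a weight `ψ` along `θ`. -/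
lemma integral_weight_mul_Xray_mul {n : ℕ} {g q : Euc n → ℝ} {ψ : ℝ → ℝ} {θ : Euc n}
    (hθ : ‖θ‖ = 1) (hg : Continuous g) (hgc : HasCompactSupport g)
    (hψ : Continuous ψ) (hψc : HasCompactSupport ψ) (hq : Continuous q)
    (hqθ : ∀ (x : Euc n) (t : ℝ), q (x + t • θ) = q x) :
    ∫ x, ψ (inner ℝ x θ) * Xray g x θ * q x = (∫ t, ψ t) * ∫ x, g x * q x := by
  obtain ⟨R, hR⟩ := hgc.exists_norm_bound
  obtain ⟨r, hr⟩ := hψc.exists_norm_bound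
  have hθθ : inner ℝ θ θ = 1 := by rw [real_inner_self_eq_norm_sq, hθ, one_pow]
  calc ∫ x, ψ (inner ℝ x θ) * Xray g x θ * q x
      = ∫ x, ∫ s : ℝ, ψ (inner ℝ x θ) * g (x + s • θ) * q x := by
        simp only [Xray, integral_mul_const, integral_const_mul]
    _ = ∫ s : ℝ, ∫ x, ψ (inner ℝ x θ) * g (x + s • θ) * q x := by
        refine integral_integral_swap_of_hasCompactSupport
          (by unfold Function.uncurry; fun_prop) ?_
        refine HasCompactSupport.intro ((isCompact_closedBall (0 : Euc n) (2 * R + r)).prod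
          (isCompact_closedBall (0 : ℝ) (R + r))) fun p hp => ?_
        by_contra hne
        have hne' : ψ (inner ℝ p.1 θ) * g (p.1 + p.2 • θ) * q p.1 ≠ 0 := hne
        have := norm_and_abs_le_of_norm_add_smul_le hθ
          (hR _ (right_ne_zero_of_mul (left_ne_zero_of_mul hne')))
          (hr _ (left_ne_zero_of_mul (left_ne_zero_of_mul hne')))
        exact hp ⟨mem_closedBall_zero_iff.2 this.1, mem_closedBall_zero_iff.2 this.2⟩
    _ = ∫ s : ℝ, ∫ x, ψ (inner ℝ x θ - s) * g x * q x := by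
        congr 1
        ext s
        rw [← integral_add_right_eq_self (fun x => ψ (inner ℝ x θ - s) * g x * q x) (s • θ)]
        simp only [inner_add_left, real_inner_smul_left, hθθ, mul_one, add_sub_cancel_right, hqθ]
    _ = ∫ x, ∫ s : ℝ, ψ (inner ℝ x θ - s) * g x * q x := by
        symm
        refine integral_integral_swap_of_hasCompactSupport
          (by unfold Function.uncurry; fun_prop) ?_
        refine HasCompactSupport.intro ((isCompact_closedBall (0 : Euc n) R).prod
          (isCompact_closedBall (0 : ℝ) (R + r))) fun p hp => ?_
        by_contra hne
        have hne' : ψ (inner ℝ p.1 θ - p.2) * g p.1 * q p.1 ≠ 0 := hne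
        have h1 := hR _ (right_ne_zero_of_mul (left_ne_zero_of_mul hne'))
        have h2 := hr _ (left_ne_zero_of_mul (left_ne_zero_of_mul hne'))
        have h3 := abs_real_inner_le_norm p.1 θ
        rw [hθ, mul_one] at h3
        have h4 := norm_sub_le (inner ℝ p.1 θ) (inner ℝ p.1 θ - p.2)
        rw [sub_sub_cancel, Real.norm_eq_abs (inner ℝ p.1 θ)] at h4
        exact hp ⟨mem_closedBall_zero_iff.2 h1, mem_closedBall_zero_iff.2 (by linarith)⟩
    _ = (∫ t, ψ t) * ∫ x, g x * q x := by
        rw [← integral_const_mul]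
        congr 1
        ext x
        rw [integral_mul_const, integral_mul_const, integral_sub_left_eq_self ψ volume, mul_assoc]

lemma integrable_comp_add_smul {n : ℕ} {g : Euc n → ℝ} (hg : Continuous g)
    (hgc : HasCompactSupport g) (x : Euc n) {θ : Euc n} (hθ : ‖θ‖ = 1) :
    Integrable fun s : ℝ => g (x + s • θ) := by
  obtain ⟨R, hR⟩ := hgc.exists_norm_bound
  refine Continuous.integrable_of_hasCompactSupport (by fun_prop) ?_
  refine HasCompactSupport.intro (isCompact_closedBall (0 : ℝ) (R + ‖inner ℝ x θ‖))
    fun s hs => ?_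
  by_contra hne
  exact hs (mem_closedBall_zero_iff.2
    (norm_and_abs_le_of_norm_add_smul_le hθ (hR _ hne) le_rfl).2)

lemma Xray_sub {n : ℕ} {f h : Euc n → ℝ} (hf : Continuous f) (hfc : HasCompactSupport f)
    (hh : Continuous h) (hhc : HasCompactSupport h) (x : Euc n) {θ : Euc n} (hθ : ‖θ‖ = 1) :
    Xray (f - h) x θ = Xray f x θ - Xray h x θ :=
  integral_sub (integrable_comp_add_smul hf hfc x hθ) (integrable_comp_add_smul hh hhc x hθ)

/-- Strict monotonicity of the exponential, as a sign condition. -/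
lemma sub_mul_exp_neg_sub_nonneg (a b : ℝ) : 0 ≤ (a - b) * (exp (-b) - exp (-a)) := by
  rcases le_total a b with hab | hab
  · exact mul_nonneg_of_nonpos_of_nonpos (by linarith)
      (sub_nonpos.2 (exp_le_exp.2 (by linarith)))
  · exact mul_nonneg (by linarith) (sub_nonneg.2 (exp_le_exp.2 (by linarith)))

/-- If the single pixel transforms agree, then so do the X-ray transforms: testing
`Kh - Kf = 0` against `f - h` gives the integral of the nonnegative function
`(Xf - Xh) (e^{-Xh} - e^{-Xf})` over all lines. -/
lemma Xray_eq_of_singlePixel_eq {n : ℕ} {f h : Euc n → ℝ}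
    (hf : Continuous f) (hfc : HasCompactSupport f)
    (hh : Continuous h) (hhc : HasCompactSupport h)
    (hK : ∀ x : Euc n, singlePixel f x = singlePixel h x) (x θ : Euc n) (hθ : ‖θ‖ = 1) :
    Xray f x θ = Xray h x θ := by
  have hg : Continuous (f - h) := hf.sub hh
  have hgc : HasCompactSupport (f - h) := hfc.sub hhc
  obtain ⟨R, hR⟩ := hgc.exists_norm_bound
  let ψ : ContDiffBump (0 : ℝ) := ⟨1, 2, one_pos, one_lt_two⟩
  obtain ⟨r, hr⟩ := ψ.hasCompactSupport.exists_norm_bound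
  have : IsFiniteMeasure (sphereMeasure n) := by unfold sphereMeasure; infer_instance
  have : (sphereMeasure n).IsOpenPosMeasure := by unfold sphereMeasure; infer_instance
  have hXf := continuous_Xray hf hfc
  have hXh := continuous_Xray hh hhc
  have hXg := continuous_Xray hg hgc
  let q : Euc n × sphere (0 : Euc n) 1 → ℝ :=
    fun p => exp (-Xray h p.1 p.2) - exp (-Xray f p.1 p.2)
  have hq : Continuous q := by fun_prop
  have hqx (θ : sphere (0 : Euc n) 1) : Continuous fun x => q (x, θ) := by fun_prop
  let F : Euc n × sphere (0 : Euc n) 1 → ℝ :=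
    fun p => ψ (inner ℝ p.1 (p.2 : Euc n)) * Xray (f - h) p.1 p.2 * q p
  have hF : Continuous F := by
    have := ψ.continuous
    fun_prop
  have hFc : HasCompactSupport F := by
    refine HasCompactSupport.intro
      ((isCompact_closedBall (0 : Euc n) (2 * R + r)).prod isCompact_univ) fun p hp => ?_
    by_contra hne
    have hX : Xray (f - h) p.1 p.2 ≠ 0 := right_ne_zero_of_mul (left_ne_zero_of_mul hne)
    obtain ⟨s, hs⟩ : ∃ s : ℝ, (f - h) (p.1 + s • (p.2 : Euc n)) ≠ 0 := by
      by_contra! hzero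
      exact hX (by simp [Xray, hzero])
    have := norm_and_abs_le_of_norm_add_smul_le (norm_eq_of_mem_sphere p.2) (hR _ hs)
      (hr _ (left_ne_zero_of_mul (left_ne_zero_of_mul hne)))
    exact hp ⟨mem_closedBall_zero_iff.2 this.1, Set.mem_univ _⟩
  have hF0 (p) : 0 ≤ F p := by
    simp only [F, q, Xray_sub hf hfc hh hhc p.1 (norm_eq_of_mem_sphere p.2), mul_assoc]
    exact mul_nonneg ψ.nonneg (sub_mul_exp_neg_sub_nonneg _ _)
  have hKq (x : Euc n) : ∫ θ, q (x, θ) ∂sphereMeasure n = 0 := by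
    have hint {u : Euc n → ℝ} (hu : Continuous fun p : Euc n × sphere (0 : Euc n) 1 =>
        Xray u p.1 p.2) : Integrable (fun θ : sphere (0 : Euc n) 1 => exp (-Xray u x θ))
          (sphereMeasure n) := by
      have hx : Continuous fun θ : sphere (0 : Euc n) 1 => Xray u x θ :=
        hu.comp (Continuous.prodMk_right x)
      exact Continuous.integrable_of_hasCompactSupport (by fun_prop)
        (HasCompactSupport.of_compactSpace _)
    exact (integral_sub (hint hXh) (hint hXf)).trans (sub_eq_zero.2 (hK x).symm)
  have hFint : ∫ p, F p ∂(volume.prod (sphereMeasure n)) = 0 := by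
    rw [integral_prod_symm _ (hF.integrable_of_hasCompactSupport hFc)]
    calc ∫ θ, (∫ x, F (x, θ)) ∂sphereMeasure n
        = ∫ θ, (∫ t, ψ t) * (∫ x, (f - h) x * q (x, θ)) ∂sphereMeasure n := by
          congr 1
          ext θ
          exact integral_weight_mul_Xray_mul (norm_eq_of_mem_sphere θ) hg hgc ψ.continuous
            ψ.hasCompactSupport (hqx θ) (fun x t => by simp only [q, Xray_add_smul])
      _ = (∫ t, ψ t) * ∫ x, ∫ θ, (f - h) x * q (x, θ) ∂sphereMeasure n := by
          rw [integral_const_mul]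
          congr 1
          symm
          refine integral_integral_swap_of_hasCompactSupport
            (f := fun x θ => (f - h) x * q (x, θ)) (by unfold Function.uncurry; fun_prop) ?_
          refine HasCompactSupport.intro
            ((isCompact_closedBall (0 : Euc n) R).prod isCompact_univ) fun p hp => ?_
          by_contra hne
          exact hp ⟨mem_closedBall_zero_iff.2 (hR _ (left_ne_zero_of_mul hne)), Set.mem_univ _⟩
      _ = 0 := by simp only [integral_const_mul, hKq, mul_zero, integral_zero]
  have hFzero (p) : F p = 0 := by
    by_contra hne
    exact (hF.integral_pos_of_hasCompactSupport_nonneg_nonzero hFc hF0 hne).ne' hFint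
  let y : Euc n := x + (-inner ℝ x θ) • θ
  have hy : inner ℝ y θ = 0 := by
    simp [y, inner_add_left, real_inner_smul_left, hθ]
  have hψ : ψ (0 : ℝ) = 1 := ψ.one_of_mem_closedBall (by simp [ψ.rIn_pos.le])
  have hval := hFzero (y, ⟨θ, mem_sphere_zero_iff_norm.2 hθ⟩)
  simp only [F, q, hy, hψ, one_mul, Xray_sub hf hfc hh hhc y hθ, y, Xray_add_smul,
    mul_eq_zero, sub_eq_zero, exp_eq_exp, neg_inj] at hval
  exact hval.elim id Eq.symm

/-- For `n ≥ 2` and `f, h` continuous with compact support, `Kf = Kh` everywhere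
implies `Xf = Xh` everywhere; in particular, if the X-ray transform is injective on continuous
compactly supported functions, then `f = h`. -/
theorem singlePixel_injective (n : ℕ) (hn : 2 ≤ n) (f h : Euc n → ℝ)
    (hf : Continuous f) (hfc : HasCompactSupport f)
    (hh : Continuous h) (hhc : HasCompactSupport h)
    (hK : ∀ x : Euc n, singlePixel f x = singlePixel h x) :
    (∀ (x θ : Euc n), ‖θ‖ = 1 → Xray f x θ = Xray h x θ) ∧
    ((∀ g : Euc n → ℝ, Continuous g → HasCompactSupport g →
        (∀ (x θ : Euc n), ‖θ‖ = 1 → Xray g x θ = 0) → g = 0) → f = h) := by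
  have hX := Xray_eq_of_singlePixel_eq hf hfc hh hhc hK
  refine ⟨hX, fun hinj => sub_eq_zero.1 (hinj (f - h) (hf.sub hh) (hfc.sub hhc) ?_)⟩
  intro x θ hθ
  rw [Xray_sub hf hfc hh hhc x hθ, hX x θ hθ, sub_self]
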